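/- Absorption property: for every n ≥ 1, a braid β ∈ B_∞ belongs to the subgroup B_n if and only if β ▷ 1^[n] = 1^[n+1], where 1^[m] denotes the m-th right power of the unit braid under ▷ (so that 1^[m] = σ_{m−1} ⋯ σ₂ σ₁). -/

import Mathlib

/-- The braid relations on generators indexed by `ℕ` (generator `i` stands for
the Artin generator `σ_{i+1}` of the paper). -/
def braidRels : Set (FreeGroup ℕ) :=
  {r | (∃ i j : ℕ, i + 2 ≤ j ∧
          r = .of i * .of j * (.of i)⁻¹ * (.of j)⁻¹) ∨
       (∃ i : ℕ,
          r = .of i * .of (i + 1) * .of i *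
              (.of (i + 1) * .of i * .of (i + 1))⁻¹)}

/-- The braid group on infinitely many strands. -/
abbrev Binf : Type := PresentedGroup braidRels

/-- `σ i` is the Artin generator `σ_{i+1}` of the paper (0-indexed). -/
def σ (i : ℕ) : Binf := PresentedGroup.of i

lemma mk_rel_eq_one {r : FreeGroup ℕ} (h : r ∈ braidRels) :
    PresentedGroup.mk braidRels r = 1 :=
  (QuotientGroup.eq_one_iff r).mpr (Subgroup.subset_normalClosure h)

lemma shift_lift_eq_one :
    ∀ r ∈ braidRels, FreeGroup.lift (fun n => σ (n + 1)) r = 1 := by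
  intro r hr
  have key : ∀ s ∈ braidRels, FreeGroup.lift (fun n => σ (n + 1)) s
      = PresentedGroup.mk braidRels (FreeGroup.map (· + 1) s) := by
    intro s _
    have : (FreeGroup.lift (fun n => σ (n + 1)) : FreeGroup ℕ →* Binf)
        = (PresentedGroup.mk braidRels).comp (FreeGroup.map (· + 1)) := by
      apply FreeGroup.ext_hom
      intro x
      simp [σ, PresentedGroup.of]
    rw [this]; rfl
  rw [key r hr]
  apply mk_rel_eq_one
  rcases hr with ⟨i, j, hij, rfl⟩ | ⟨i, rfl⟩
  · exact Or.inl ⟨i + 1, j + 1, by omega, by simp⟩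
  · exact Or.inr ⟨i + 1, by simp⟩

/-- The shift endomorphism of the braid group, mapping `σ i` to `σ (i+1)`. -/
def sh : Binf →* Binf := PresentedGroup.toGroup shift_lift_eq_one

@[simp] lemma sh_σ (i : ℕ) : sh (σ i) = σ (i + 1) :=
  PresentedGroup.toGroup.of shift_lift_eq_one

/-- The shifted-conjugation (selfdistributive) operation on `Binf`:
`β₁ ▷ β₂ = β₁ · sh β₂ · σ₁ · (sh β₁)⁻¹`. -/
def sc (β₁ β₂ : Binf) : Binf := β₁ * sh β₂ * σ 0 * (sh β₁)⁻¹

/-- `rpow a m` is the `m`-th right power `a^[m]` (defined for `m ≥ 1`;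
`rpow a 0` is a junk value). -/
def rpow (a : Binf) : ℕ → Binf
  | 0 => a
  | 1 => a
  | m + 2 => sc a (rpow a (m + 1))

/-- The subgroup `B_n` of `Binf` generated by the paper's `σ₁, …, σ_{n-1}`
(our `σ 0, …, σ (n-2)`). -/
def Bfin (n : ℕ) : Subgroup Binf := Subgroup.closure (σ '' {i | i + 2 ≤ n})


lemma σ_comm {i j : ℕ} (h : i + 2 ≤ j) : σ i * σ j = σ j * σ i := by
  have := mk_rel_eq_one (r := .of i * .of j * (.of i)⁻¹ * (.of j)⁻¹) (Or.inl ⟨i, j, h, rfl⟩)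
  simp only [map_mul, map_inv] at this
  change σ i * σ j * (σ i)⁻¹ * (σ j)⁻¹ = 1 at this
  rw [mul_inv_eq_one, mul_inv_eq_iff_eq_mul] at this
  exact this

lemma σ_braid (i : ℕ) : σ i * σ (i + 1) * σ i = σ (i + 1) * σ i * σ (i + 1) := by
  have := mk_rel_eq_one (r := .of i * .of (i + 1) * .of i *
              (.of (i + 1) * .of i * .of (i + 1))⁻¹) (Or.inr ⟨i, rfl⟩)
  simp only [map_mul, map_inv] at this
  change σ i * σ (i + 1) * σ i * (σ (i + 1) * σ i * σ (i + 1))⁻¹ = 1 at this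
  rwa [mul_inv_eq_one] at this

/-- Action of a crossing while forgetting the strand at position `p.1`. -/
def fgt (i : ℕ) (p : ℕ × Binf) : ℕ × Binf :=
  if p.1 = i then (i + 1, p.2) else if p.1 = i + 1 then (i, p.2)
  else if p.1 < i then (p.1, σ (i - 1) * p.2) else (p.1, σ i * p.2)

/-- Inverse of `fgt`. -/
def fgtInv (i : ℕ) (p : ℕ × Binf) : ℕ × Binf :=
  if p.1 = i then (i + 1, p.2) else if p.1 = i + 1 then (i, p.2)
  else if p.1 < i then (p.1, (σ (i - 1))⁻¹ * p.2) else (p.1, (σ i)⁻¹ * p.2)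

/-- `fgt` as a permutation. -/
def fgtE (i : ℕ) : Equiv.Perm (ℕ × Binf) where
  toFun := fgt i
  invFun := fgtInv i
  left_inv := by
    rintro ⟨k, b⟩
    unfold fgt fgtInv
    dsimp only
    split_ifs <;> simp_all
  right_inv := by
    rintro ⟨k, b⟩
    unfold fgt fgtInv
    dsimp only
    split_ifs <;> simp_all

lemma fgt_self (i : ℕ) (b : Binf) : fgt i (i, b) = (i + 1, b) := by simp [fgt]
lemma fgt_succ (i : ℕ) (b : Binf) : fgt i (i + 1, b) = (i, b) := by simp [fgt]
lemma fgt_lt {i k : ℕ} (h : k < i) (b : Binf) : fgt i (k, b) = (k, σ (i - 1) * b) := by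
  have h1 : k ≠ i := by omega
  have h2 : k ≠ i + 1 := by omega
  simp [fgt, h1, h2, h]
lemma fgt_gt {i k : ℕ} (h : i + 1 < k) (b : Binf) : fgt i (k, b) = (k, σ i * b) := by
  have h1 : k ≠ i := by omega
  have h2 : k ≠ i + 1 := by omega
  have h3 : ¬ k < i := by omega
  simp [fgt, h1, h2, h3]

lemma fgt_comm {i j : ℕ} (h : i + 2 ≤ j) (p : ℕ × Binf) :
    fgt i (fgt j p) = fgt j (fgt i p) := by
  obtain ⟨k, b⟩ := p
  rcases lt_trichotomy k i with hk | rfl | hk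
  · rw [fgt_lt (by omega : k < j), fgt_lt hk, fgt_lt hk, fgt_lt (by omega : k < j),
      ← mul_assoc, ← mul_assoc, σ_comm (by omega)]
  · rw [fgt_lt (by omega : k < j), fgt_self, fgt_self, fgt_lt (by omega)]
  obtain rfl | hk := (Nat.succ_le_of_lt hk).eq_or_lt
  · rw [Nat.succ_eq_add_one, fgt_lt (by omega : i + 1 < j), fgt_succ, fgt_succ,
      fgt_lt (by omega : i < j)]
  have hk : i + 1 < k := hk
  rcases lt_trichotomy k j with hj | rfl | hj
  · rw [fgt_lt hj, fgt_gt hk, fgt_gt hk, fgt_lt hj, ← mul_assoc, ← mul_assoc, σ_comm (by omega)]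
  · rw [fgt_gt hk, fgt_self, fgt_self, fgt_gt (by omega)]
  obtain rfl | hj := (Nat.succ_le_of_lt hj).eq_or_lt
  · rw [fgt_gt hk, Nat.succ_eq_add_one, fgt_succ, fgt_succ, fgt_gt (by omega)]
  have hj : j + 1 < k := hj
  rw [fgt_gt hj, fgt_gt hk, fgt_gt hk, fgt_gt hj, ← mul_assoc, ← mul_assoc, σ_comm (by omega)]

lemma fgt_braid (i : ℕ) (p : ℕ × Binf) :
    fgt i (fgt (i + 1) (fgt i p)) = fgt (i + 1) (fgt i (fgt (i + 1) p)) := by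
  obtain ⟨k, b⟩ := p
  rcases lt_trichotomy k i with hk | rfl | hk
  · obtain ⟨i, rfl⟩ : ∃ t, i = t + 1 := ⟨i - 1, by omega⟩
    simp only [fgt_lt hk, fgt_lt (by omega : k < i + 1 + 1), Nat.add_sub_cancel, ← mul_assoc]
    rw [σ_braid]
  · rw [fgt_self, fgt_self, fgt_gt (by omega : k + 1 < k + 1 + 1),
      fgt_lt (by omega : k < k + 1), fgt_self, fgt_self]
    simp
  obtain rfl | hk := (Nat.succ_le_of_lt hk).eq_or_lt
  · rw [Nat.succ_eq_add_one, fgt_succ, fgt_lt (by omega : i < i + 1), fgt_self, fgt_self,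
      fgt_gt (by omega : i + 1 < i + 1 + 1), fgt_succ]
    simp
  obtain rfl | hk := (Nat.succ_le_of_lt hk).eq_or_lt
  · rw [Nat.succ_eq_add_one, fgt_gt (by omega : i + 1 < i + 1 + 1), fgt_succ, fgt_succ,
      fgt_succ, fgt_succ, fgt_lt (by omega : i < i + 1)]
    simp
  have hk : i + 1 + 1 < k := hk
  have hk' : i + 1 < k := by omega
  simp only [fgt_gt hk, fgt_gt hk', ← mul_assoc]
  rw [σ_braid]

lemma fgt_rel : ∀ r ∈ braidRels, FreeGroup.lift fgtE r = 1 := by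
  rintro r (⟨i, j, h, rfl⟩ | ⟨i, rfl⟩)
  · simp only [map_mul, map_inv, FreeGroup.lift_apply_of]
    rw [mul_inv_eq_one, mul_inv_eq_iff_eq_mul]
    ext1 p
    exact fgt_comm h p
  · simp only [map_mul, map_inv, FreeGroup.lift_apply_of]
    rw [mul_inv_eq_one]
    ext1 p
    exact fgt_braid i p

/-- The strand-forgetting action. -/
def Φ : Binf →* Equiv.Perm (ℕ × Binf) := PresentedGroup.toGroup fgt_rel

lemma Φ_σ (i : ℕ) : Φ (σ i) = fgtE i := PresentedGroup.toGroup.of fgt_rel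

lemma Φ_σ_apply (i : ℕ) (p : ℕ × Binf) : Φ (σ i) p = fgt i p := by rw [Φ_σ]; rfl

lemma Φ_σ_inv_apply (i : ℕ) (p : ℕ × Binf) : Φ (σ i)⁻¹ p = fgtInv i p := by
  rw [map_inv, Φ_σ]; rfl

lemma closure_σ : Subgroup.closure (Set.range σ) = ⊤ :=
  PresentedGroup.closure_range_of braidRels

lemma Φ_sh (β : Binf) : ∀ b, Φ (sh β) (0, b) = (0, β * b) := by
  have hβ : β ∈ Subgroup.closure (Set.range σ) := by rw [closure_σ]; trivial
  induction hβ using Subgroup.closure_induction with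
  | mem x hx =>
    obtain ⟨i, rfl⟩ := hx
    intro b
    rw [sh_σ, Φ_σ_apply, fgt_lt (by omega)]
    simp
  | one => simp
  | mul x y _ _ hx hy =>
    intro b
    rw [map_mul, map_mul, Equiv.Perm.mul_apply, hy, hx, mul_assoc]
  | inv x _ hx =>
    intro b
    rw [map_inv, map_inv, Equiv.Perm.inv_eq_iff_eq, hx]
    simp

lemma rpow_succ' (k : ℕ) : rpow 1 (k + 2) = sh (rpow 1 (k + 1)) * σ 0 := by
  simp [rpow, sc]

lemma rpow_eq (k : ℕ) : rpow 1 (k + 2) = σ k * rpow 1 (k + 1) := by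
  induction k with
  | zero => simp [rpow, sc]
  | succ k ih =>
    rw [rpow_succ' (k + 1)]
    rw [show k + 1 + 1 = k + 2 from rfl]
    conv_lhs => rw [ih]
    rw [map_mul, sh_σ, mul_assoc, ← rpow_succ']

lemma Φ_rpow (n : ℕ) (b : Binf) : Φ (rpow 1 (n + 1)) (0, b) = (n, b) := by
  induction n with
  | zero => simp [rpow]
  | succ n ih => rw [rpow_eq, map_mul, Equiv.Perm.mul_apply, ih, Φ_σ_apply, fgt_self]

lemma mem_Bfin {i m : ℕ} (h : i + 2 ≤ m) : σ i ∈ Bfin m :=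
  Subgroup.subset_closure ⟨i, h, rfl⟩

lemma Φ_Bfin {m : ℕ} {β : Binf} (hβ : β ∈ Bfin (m + 1)) :
    ∀ k ≤ m, ∀ b ∈ Bfin m, (Φ β (k, b)).1 ≤ m ∧ (Φ β (k, b)).2 ∈ Bfin m := by
  unfold Bfin at hβ
  induction hβ using Subgroup.closure_induction'' with
  | mem x hx =>
    obtain ⟨i, hi, rfl⟩ := hx
    simp only [Set.mem_ofPred_eq] at hi
    intro k hk b hb
    rw [Φ_σ_apply]
    unfold fgt
    dsimp only
    split_ifs
    · exact ⟨by omega, hb⟩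
    · exact ⟨by omega, hb⟩
    · exact ⟨hk, mul_mem (mem_Bfin (by omega)) hb⟩
    · exact ⟨hk, mul_mem (mem_Bfin (by omega)) hb⟩
  | inv_mem x hx =>
    obtain ⟨i, hi, rfl⟩ := hx
    simp only [Set.mem_ofPred_eq] at hi
    intro k hk b hb
    rw [Φ_σ_inv_apply]
    unfold fgtInv
    dsimp only
    split_ifs
    · exact ⟨by omega, hb⟩
    · exact ⟨by omega, hb⟩
    · exact ⟨hk, mul_mem (inv_mem (mem_Bfin (by omega))) hb⟩
    · exact ⟨hk, mul_mem (inv_mem (mem_Bfin (by omega))) hb⟩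
  | one => intro k hk b hb; simpa using ⟨hk, hb⟩
  | mul x y _ _ hx hy =>
    intro k hk b hb
    rw [map_mul, Equiv.Perm.mul_apply]
    obtain ⟨h1, h2⟩ := hy k hk b hb
    exact hx _ h1 _ h2

lemma Bfin_mono {m m' : ℕ} (h : m ≤ m') : Bfin m ≤ Bfin m' :=
  Subgroup.closure_mono (Set.image_mono fun i (hi : i + 2 ≤ m) => hi.trans h)

lemma exists_Bfin (β : Binf) : ∃ m, β ∈ Bfin m := by
  have hβ : β ∈ Subgroup.closure (Set.range σ) := by rw [closure_σ]; trivial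
  induction hβ using Subgroup.closure_induction with
  | mem x hx =>
    obtain ⟨i, rfl⟩ := hx
    exact ⟨i + 2, mem_Bfin le_rfl⟩
  | one => exact ⟨0, one_mem _⟩
  | mul x y _ _ hx hy =>
    obtain ⟨a, ha⟩ := hx
    obtain ⟨c, hc⟩ := hy
    exact ⟨max a c, mul_mem (Bfin_mono (le_max_left _ _) ha) (Bfin_mono (le_max_right _ _) hc)⟩
  | inv x _ hx =>
    obtain ⟨a, ha⟩ := hx
    exact ⟨a, inv_mem ha⟩

lemma descend {n m : ℕ} (h : n ≤ m) {β : Binf} (hβ : β ∈ Bfin (m + 1))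
    (e : β * rpow 1 (n + 1) = rpow 1 (n + 1) * sh β) : β ∈ Bfin m := by
  have := congrArg (fun x => Φ x (0, 1)) e
  simp only [map_mul, Equiv.Perm.mul_apply, Φ_sh, Φ_rpow, mul_one] at this
  have h2 := (Φ_Bfin hβ n h 1 (one_mem _)).2
  rwa [this] at h2

lemma σ_rpow_comm {j n : ℕ} (h : n < j) : σ j * rpow 1 (n + 1) = rpow 1 (n + 1) * σ j := by
  induction n with
  | zero => simp [rpow]
  | succ n ih =>
    rw [rpow_eq, ← mul_assoc, ← σ_comm (by omega), mul_assoc, ih (by omega), mul_assoc]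

lemma σ_rpow {i n : ℕ} (h : i + 2 ≤ n) :
    σ i * rpow 1 (n + 1) = rpow 1 (n + 1) * σ (i + 1) := by
  induction n with
  | zero => omega
  | succ n ih =>
    rcases Nat.lt_or_ge n (i + 2) with h1 | h1
    · obtain rfl : n = i + 1 := by omega
      rw [rpow_eq, rpow_eq, ← mul_assoc, ← mul_assoc, σ_braid, mul_assoc,
        σ_rpow_comm (by omega)]
      simp only [mul_assoc]
    · rw [rpow_eq, ← mul_assoc, σ_comm (by omega), mul_assoc, ih h1, mul_assoc]

/-- absorption property. For `n ≥ 1`, `β ∈ B_n` iff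
`β ▷ 1^[n] = 1^[n+1]`. -/
theorem absorption (n : ℕ) (hn : 1 ≤ n) (β : Binf) :
    β ∈ Bfin n ↔ sc β (rpow 1 n) = rpow 1 (n + 1) := by
  have key : sc β (rpow 1 n) = rpow 1 (n + 1) ↔
      β * rpow 1 (n + 1) = rpow 1 (n + 1) * sh β := by
    obtain ⟨k, rfl⟩ : ∃ k, n = k + 1 := ⟨n - 1, by omega⟩
    rw [sc, mul_inv_eq_iff_eq_mul, mul_assoc, ← rpow_succ']
  rw [key]
  constructor
  · intro hβ
    unfold Bfin at hβ
    induction hβ using Subgroup.closure_induction with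
    | mem x hx =>
      obtain ⟨i, hi, rfl⟩ := hx
      rw [sh_σ]
      exact σ_rpow hi
    | one => simp
    | mul x y _ _ hx hy =>
      have hx := hx (by
        obtain ⟨k, rfl⟩ : ∃ k, n = k + 1 := ⟨n - 1, by omega⟩
        rw [sc, mul_inv_eq_iff_eq_mul, mul_assoc, ← rpow_succ'])
      have hy := hy (by
        obtain ⟨k, rfl⟩ : ∃ k, n = k + 1 := ⟨n - 1, by omega⟩
        rw [sc, mul_inv_eq_iff_eq_mul, mul_assoc, ← rpow_succ'])
      rw [map_mul, mul_assoc, hy, ← mul_assoc, hx, mul_assoc]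
    | inv x _ hx =>
      have hx := hx (by
        obtain ⟨k, rfl⟩ : ∃ k, n = k + 1 := ⟨n - 1, by omega⟩
        rw [sc, mul_inv_eq_iff_eq_mul, mul_assoc, ← rpow_succ'])
      rw [map_inv, inv_mul_eq_iff_eq_mul, ← mul_assoc, hx, mul_inv_cancel_right]
  · intro e
    obtain ⟨m, hm⟩ := exists_Bfin β
    have : ∀ d, β ∈ Bfin (n + d) → β ∈ Bfin n := by
      intro d
      induction d with
      | zero => exact id
      | succ d ih => exact fun h => ih (descend (by omega) h e)
    exact this m (Bfin_mono (by omega) hm)
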